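/- Assume l₇ ≠ 0. Fix τ > 0 and φ > 0, set ξ = φ τ^{-1/p}, and let f be positive and twice continuously differentiable on a neighborhood of ξ in (0,∞). Then the function w(τ,φ) := f(φ τ^{-1/p}) satisfies ∂_τ w = φ^{1-s} ∂_φ( φ^{s-1} w^{m₂-1} |∂_φ(w^{k₂})|^{p-2} ∂_φ w ) + (w^{β₂} + w)/(l₇ τ) at the point (τ,φ) if and only if (Af)(ξ) = 0, where A is the self-similar operator. -/

import Mathlib

open Real Set Filter Topology

/-- The self-similar operator
`(Af)(ξ) = ξ^{1-s} (ξ^{s-1} f^{m₂-1} |(f^{k₂})'|^{p-2} f')' + (ξ/p) f' + (f + f^{β₂})/l₇`. -/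
noncomputable def selfSimOp (p m₂ k₂ β₂ s l₇ : ℝ) (f : ℝ → ℝ) (ξ : ℝ) : ℝ :=
  ξ ^ (1 - s) *
      deriv (fun x => x ^ (s - 1) * f x ^ (m₂ - 1) *
        |deriv (fun y => f y ^ k₂) x| ^ (p - 2) * deriv f x) ξ
    + (ξ / p) * deriv f ξ + (f ξ + f ξ ^ β₂) / l₇

/-!
The diffusion term is homogeneous of degree `p` under dilations of the space variable: replacing
`u` by `u(c ·)` multiplies it by `c^p`. With `c = τ^{-1/p}` this factor is `τ⁻¹`, which is also
the factor that the chain rule produces in `∂_τ w = -(ξ/p) f'(ξ) / τ` and the one carried by the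
source term. The evolution equation at `(τ, φ)` is therefore `τ⁻¹` times `(Af)(ξ) = 0`.
-/

/-- The flux `x^{s-1} u^{m-1} |(u^k)'|^{p-2} u'` of a profile `u`; it occurs in the evolution
equation with `u = w(τ, ·)` and in the self-similar operator with `u = f`. -/
noncomputable def flux (p m k s : ℝ) (u : ℝ → ℝ) (x : ℝ) : ℝ :=
  x ^ (s - 1) * u x ^ (m - 1) * |deriv (fun y => u y ^ k) x| ^ (p - 2) * deriv u x

/-- The doubly nonlinear diffusion term `x^{1-s} (x^{s-1} u^{m-1} |(u^k)'|^{p-2} u')'`; the real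
parameter `s` plays the role of the dimension in a radial divergence. -/
noncomputable def nonlinearDiffusion (p m k s : ℝ) (u : ℝ → ℝ) (x : ℝ) : ℝ :=
  x ^ (1 - s) * deriv (flux p m k s u) x

theorem deriv_comp_mul_right {𝕜 E : Type*} [NontriviallyNormedField 𝕜] [NormedAddCommGroup E]
    [NormedSpace 𝕜 E] (c : 𝕜) (f : 𝕜 → E) (x : 𝕜) :
    deriv (fun y => f (y * c)) x = c • deriv f (x * c) := by
  simpa only [mul_comm c] using deriv_comp_mul_left c f x

section Scaling

variable {c x : ℝ} (p m k s : ℝ) (u : ℝ → ℝ)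

theorem flux_comp_mul_right (hc : 0 < c) (hx : 0 ≤ x) :
    flux p m k s (fun y => u (y * c)) x = c ^ (p - s) * flux p m k s u (x * c) := by
  have exponents : c ^ (p - s) * c ^ (s - 1) = c ^ (p - 2) * c := by
    rw [← rpow_add hc, ← rpow_add_one hc.ne']
    ring_nf
  simp only [flux]
  rw [deriv_comp_mul_right c (fun y => u y ^ k), deriv_comp_mul_right c u, smul_eq_mul,
    smul_eq_mul, abs_mul, abs_of_pos hc, mul_rpow hc.le (abs_nonneg _), mul_rpow hx hc.le]
  linear_combination (-(x ^ (s - 1) * u (x * c) ^ (m - 1) *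
    |deriv (fun y => u y ^ k) (x * c)| ^ (p - 2) * deriv u (x * c))) * exponents

theorem deriv_flux_comp_mul_right (hc : 0 < c) (hx : 0 < x) :
    deriv (flux p m k s fun y => u (y * c)) x =
      c ^ (p - s) * (c * deriv (flux p m k s u) (x * c)) := by
  have flux_eventuallyEq : (flux p m k s fun y => u (y * c)) =ᶠ[𝓝 x]
      fun y => c ^ (p - s) * flux p m k s u (y * c) := by
    filter_upwards [lt_mem_nhds hx] with y hy using flux_comp_mul_right p m k s u hc hy.le
  rw [flux_eventuallyEq.deriv_eq, deriv_const_mul_field, deriv_comp_mul_right, smul_eq_mul]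

theorem nonlinearDiffusion_comp_mul_right (hc : 0 < c) (hx : 0 < x) :
    nonlinearDiffusion p m k s (fun y => u (y * c)) x =
      c ^ p * nonlinearDiffusion p m k s u (x * c) := by
  have exponents : c ^ (p - s) * c = c ^ p * c ^ (1 - s) := by
    rw [← rpow_add hc, ← rpow_add_one hc.ne']
    ring_nf
  simp only [nonlinearDiffusion]
  rw [deriv_flux_comp_mul_right p m k s u hc hx, mul_rpow hx.le hc.le]
  linear_combination x ^ (1 - s) * deriv (flux p m k s u) (x * c) * exponents

end Scaling

theorem deriv_comp_const_mul_rpow {f : ℝ → ℝ} {a b t : ℝ} (ht : t ≠ 0)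
    (hf : DifferentiableAt ℝ f (b * t ^ a)) :
    deriv (fun x => f (b * x ^ a)) t = a * (b * t ^ a) * deriv f (b * t ^ a) / t := by
  have inner : HasDerivAt (fun x : ℝ => b * x ^ a) (b * (a * t ^ (a - 1))) t :=
    (hasDerivAt_rpow_const (Or.inl ht)).const_mul b
  calc deriv (fun x => f (b * x ^ a)) t
      = deriv f (b * t ^ a) * (b * (a * t ^ (a - 1))) := (hf.hasDerivAt.comp t inner).deriv
    _ = a * (b * t ^ a) * deriv f (b * t ^ a) / t := by rw [rpow_sub_one ht]; ring

theorem rpow_neg_one_div_rpow_self {t p : ℝ} (ht : 0 ≤ t) (hp : p ≠ 0) :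
    (t ^ (-1 / p)) ^ p = t⁻¹ := by
  rw [← rpow_mul ht, div_mul_cancel₀ _ hp, rpow_neg_one]

theorem stmt4_general {p m₂ k₂ β₂ s l₇ τ φ ξ : ℝ} {f : ℝ → ℝ}
    (hp : p ≠ 0) (hl₇ : l₇ ≠ 0) (hτ : 0 < τ) (hφ : 0 < φ)
    (hξ : ξ = φ * τ ^ (-1 / p)) (hf : DifferentiableAt ℝ f ξ) :
    (deriv (fun x => f (φ * x ^ (-1 / p))) τ
      = φ ^ (1 - s) *
          deriv (fun y => y ^ (s - 1) * f (y * τ ^ (-1 / p)) ^ (m₂ - 1) *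
            |deriv (fun y' => f (y' * τ ^ (-1 / p)) ^ k₂) y| ^ (p - 2) *
            deriv (fun y' => f (y' * τ ^ (-1 / p))) y) φ
        + (f (φ * τ ^ (-1 / p)) ^ β₂ + f (φ * τ ^ (-1 / p))) / (l₇ * τ))
    ↔ selfSimOp p m₂ k₂ β₂ s l₇ f ξ = 0 := by
  subst hξ
  set c := τ ^ (-1 / p)
  have time_term : deriv (fun x => f (φ * x ^ (-1 / p))) τ =
      -1 / p * (φ * c) * deriv f (φ * c) / τ := deriv_comp_const_mul_rpow hτ.ne' hf
  have space_term : nonlinearDiffusion p m₂ k₂ s (fun y => f (y * c)) φ =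
      τ⁻¹ * nonlinearDiffusion p m₂ k₂ s f (φ * c) := by
    rw [nonlinearDiffusion_comp_mul_right p m₂ k₂ s f (rpow_pos_of_pos hτ _) hφ,
      rpow_neg_one_div_rpow_self hτ.le hp]
  change _ = nonlinearDiffusion p m₂ k₂ s (fun y => f (y * c)) φ + _ ↔
    nonlinearDiffusion p m₂ k₂ s f (φ * c) + _ + _ = 0
  rw [time_term, space_term]
  field_simp
  constructor <;> intro h <;> linarith

/-- For `w(τ,φ) = f(φ τ^{-1/p})`, the equation
`∂_τ w = φ^{1-s} ∂_φ(φ^{s-1} w^{m₂-1} |∂_φ(w^{k₂})|^{p-2} ∂_φ w) + (w^{β₂}+w)/(l₇ τ)`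
holds at `(τ,φ)` iff `(Af)(ξ) = 0` at `ξ = φ τ^{-1/p}`. -/
theorem stmt4
    (p q k m N n n₁ l β : ℝ)
    (hp : 2 ≤ p) (hq0 : 0 < q) (hq1 : q < 1) (hk : 1 ≤ k) (hm : 1 ≤ m)
    (hn0 : 0 ≤ n) (hnN : n < N) (hpn : n + n₁ < p)
    (m₂ k₂ β₂ s l₅ l₇ : ℝ)
    (hm₂ : m₂ = m / (1 - q)) (hk₂ : k₂ = k / (1 - q))
    (hβ₂ : β₂ = (β - q) / (1 - q))
    (hs : s = p * (N - n) / (p - n - n₁))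
    (hl₅ : l₅ = (1 + l) * (m₂ + k₂ * (p - 2) - 1))
    (hl₇def : l₇ = -(l₅ + 1 - β₂) / (1 + l))
    (hl₇ : l₇ ≠ 0)
    (τ φ : ℝ) (hτ : 0 < τ) (hφ : 0 < φ)
    (ξ : ℝ) (hξ : ξ = φ * τ ^ (-1 / p))
    (f : ℝ → ℝ) (U : Set ℝ)
    (hU : U ∈ 𝓝 ξ) (hUsub : U ⊆ Ioi 0)
    (hf : ContDiffOn ℝ 2 f U) (hfpos : ∀ x ∈ U, 0 < f x) :
    (deriv (fun x => f (φ * x ^ (-1 / p))) τ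
      = φ ^ (1 - s) *
          deriv (fun y => y ^ (s - 1) * f (y * τ ^ (-1 / p)) ^ (m₂ - 1) *
            |deriv (fun y' => f (y' * τ ^ (-1 / p)) ^ k₂) y| ^ (p - 2) *
            deriv (fun y' => f (y' * τ ^ (-1 / p))) y) φ
        + (f (φ * τ ^ (-1 / p)) ^ β₂ + f (φ * τ ^ (-1 / p))) / (l₇ * τ))
    ↔ selfSimOp p m₂ k₂ β₂ s l₇ f ξ = 0 :=
  stmt4_general (by linarith) hl₇ hτ hφ hξ ((hf.contDiffAt hU).differentiableAt two_ne_zero)
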